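/- arXiv:2203.06135 — 2 statements merged into one kernel-verified Lean document; each statement's English description precedes it below -/
import Mathlib

section
/- Let d ≥ 1, let Δ ⊆ ℝ^d be a convex body, and let G, G̃ : Δ → ℝ be concave and upper semicontinuous functions with G(α) ≤ G̃(α) for all α ∈ Δ and G(α₀) < G̃(α₀) for some α₀ ∈ Δ. Then there exists a real number c such that ∫_Δ max(0, G(α)+c) dμ(α) < ∫_Δ max(0, G̃(α)+c) dμ(α), where μ is the Lebesgue measure on ℝ^d. -/
open MeasureTheory

/-- A strict inequality somewhere between two ordered concave usc functions on a
convex body propagates to a strict inequality of the integrals ∫ max(0, ·+c). -/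
theorem stmt_1 {d : ℕ} (hd : 1 ≤ d) (Δ : Set (EuclideanSpace ℝ (Fin d)))
    (hconv : Convex ℝ Δ) (hcomp : IsCompact Δ) (hint : (interior Δ).Nonempty)
    (G Gt : EuclideanSpace ℝ (Fin d) → ℝ)
    (hGconc : ConcaveOn ℝ Δ G) (hGusc : UpperSemicontinuousOn G Δ)
    (hGtconc : ConcaveOn ℝ Δ Gt) (hGtusc : UpperSemicontinuousOn Gt Δ)
    (hle : ∀ α ∈ Δ, G α ≤ Gt α)
    (α₀ : EuclideanSpace ℝ (Fin d)) (hα₀ : α₀ ∈ Δ) (hlt : G α₀ < Gt α₀) :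
    ∃ c : ℝ, (∫ α in Δ, max 0 (G α + c)) < ∫ α in Δ, max 0 (Gt α + c) := by
  classical
  have hx : ∃ x ∈ interior Δ, G x < Gt x := by
    by_contra! hcon
    obtain ⟨y, hy⟩ := hint
    obtain ⟨m, hm1, hm2⟩ := exists_between hlt
    have h1 := (upperSemicontinuousWithinAt_iff.1 (hGusc α₀ hα₀)) m hm1
    have hc : Filter.Tendsto (fun t : ℝ => (1 - t) • α₀ + t • y) (nhdsWithin 0 (Set.Ioc 0 1))
        (nhdsWithin α₀ Δ) := by
      apply tendsto_nhdsWithin_of_tendsto_nhds_of_eventually_within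
      · have : Continuous (fun t : ℝ => (1 - t) • α₀ + t • y) := by fun_prop
        have h := this.tendsto 0
        simp only [sub_zero, one_smul, zero_smul, add_zero] at h
        exact h.mono_left nhdsWithin_le_nhds
      · filter_upwards [self_mem_nhdsWithin] with t ht
        exact interior_subset (hconv.combo_self_interior_mem_interior hα₀ hy
          (sub_nonneg.2 ht.2) ht.1 (by ring))
    have h2 : ∀ᶠ t : ℝ in nhdsWithin 0 (Set.Ioc 0 1), m < (1 - t) * Gt α₀ + t * Gt y := by
      have : Continuous (fun t : ℝ => (1 - t) * Gt α₀ + t * Gt y) := by fun_prop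
      have h := this.tendsto 0
      simp only [sub_zero, one_mul, zero_mul, add_zero] at h
      exact (h.mono_left nhdsWithin_le_nhds).eventually (lt_mem_nhds hm2)
    have hne : (nhdsWithin (0:ℝ) (Set.Ioc 0 1)).NeBot := by
      rw [nhdsWithin_Ioc_eq_nhdsGT (by norm_num)]
      infer_instance
    obtain ⟨t, ⟨h1t, h2t⟩, ht⟩ :=
      (((hc.eventually h1).and h2).and self_mem_nhdsWithin).exists
    have hi := hconv.combo_self_interior_mem_interior hα₀ hy
          (sub_nonneg.2 ht.2) ht.1 (by ring : 1 - t + t = 1)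
    have h3 := hGtconc.2 hα₀ (interior_subset hy) (sub_nonneg.2 ht.2) ht.1.le
      (by ring : 1 - t + t = 1)
    simp only [smul_eq_mul] at h3
    linarith [hcon _ hi]
  obtain ⟨x, hxi, hxlt⟩ := hx
  have hae : (interior Δ : Set (EuclideanSpace ℝ (Fin d))) =ᵐ[volume] Δ :=
    interior_ae_eq_of_null_frontier (hconv.addHaar_frontier volume)
  have hfin : volume (interior Δ) < ⊤ :=
    (measure_mono interior_subset).trans_lt hcomp.measure_lt_top
  refine ⟨-G x, ?_⟩
  rw [← setIntegral_congr_set hae, ← setIntegral_congr_set hae]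
  have key : ∀ F : EuclideanSpace ℝ (Fin d) → ℝ, ConcaveOn ℝ Δ F → UpperSemicontinuousOn F Δ →
      ContinuousOn (fun α => max 0 (F α + -G x)) (interior Δ) ∧
      IntegrableOn (fun α => max 0 (F α + -G x)) (interior Δ) volume := by
    intro F hF hFu
    have hc : ContinuousOn (fun α => max 0 (F α + -G x)) (interior Δ) :=
      continuousOn_const.sup (hF.continuousOn_interior.add continuousOn_const)
    refine ⟨hc, ?_⟩
    obtain ⟨M, hM⟩ := hFu.bddAbove_of_isCompact hcomp
    refine IntegrableOn.of_bound hfin (hc.aestronglyMeasurable isOpen_interior.measurableSet)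
      (max 0 (M + -G x)) ?_
    filter_upwards [ae_restrict_mem isOpen_interior.measurableSet] with a ha
    rw [Real.norm_of_nonneg (le_max_left _ _)]
    have := hM (Set.mem_image_of_mem F (interior_subset ha))
    gcongr
  obtain ⟨c1, i1⟩ := key G hGconc hGusc
  obtain ⟨c2, i2⟩ := key Gt hGtconc hGtusc
  rw [← sub_pos, ← integral_sub i2 i1]
  refine (setIntegral_pos_iff_support_of_nonneg_ae ?_ (i2.sub i1)).2 ?_
  rotate_left
  · have hopen := (c2.sub c1).isOpen_inter_preimage isOpen_interior
      (isOpen_compl_singleton (x := (0:ℝ)))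
    rw [Set.inter_comm]
    refine hopen.measure_pos volume ⟨x, hxi, ?_⟩
    have : 0 < Gt x + -G x := by linarith
    simp [max_eq_right this.le]
    linarith
  · filter_upwards [ae_restrict_mem isOpen_interior.measurableSet] with a ha
    have := hle a (interior_subset ha)
    simp only [Pi.zero_apply, Pi.sub_apply, sub_nonneg]
    gcongr
end

section
/- Let F be a field, let d ≥ 1, and let ν : Fˣ → ℤ^d be a group homomorphism from the multiplicative group of F to the additive group ℤ^d. For a family S assigning to each integer n ≥ 1 a subset S(n) ⊆ Fˣ, define Δ_ν(S) ⊆ ℝ^d as the closure (for the Euclidean topology) of the set {(1/n)·ν(s) | n ≥ 1, s ∈ S(n)}. Suppose S, S', T are three such families satisfying: (i) for all n, k ≥ 1, if s ∈ S(n) then s^k ∈ S(nk), and if s' ∈ S'(n) then s'^k ∈ S'(nk); (ii) for all n ≥ 1, if s ∈ S(n) and s' ∈ S'(n) then s·s' ∈ T(n). Then Δ_ν(S) + Δ_ν(S') ⊆ Δ_ν(T), where + denotes the Minkowski sum in ℝ^d. -/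
open Pointwise

/-- The Okounkov-type body of a family of sets of nonzero elements, with respect to
a `ℤ^d`-valued multiplicative-to-additive map ν: the Euclidean closure of the set of
normalized values ν(s)/n for s ∈ S(n), n ≥ 1. -/
def okounkovSet {F : Type*} [Field F] {d : ℕ} (ν : Fˣ → Fin d → ℤ)
    (S : ℕ → Set Fˣ) : Set (Fin d → ℝ) :=
  closure {x | ∃ n : ℕ, 1 ≤ n ∧ ∃ s ∈ S n, x = fun i => (ν s i : ℝ) / n}

/-- Superadditivity of Okounkov-type bodies: if S and S' are stable under powers and
products of S(n) with S'(n) land in T(n), then Δ_ν(S) + Δ_ν(S') ⊆ Δ_ν(T). -/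
theorem stmt_8 {F : Type*} [Field F] {d : ℕ} (hd : 1 ≤ d)
    (ν : Fˣ → Fin d → ℤ) (hν : ∀ a b : Fˣ, ν (a * b) = ν a + ν b)
    (S S' T : ℕ → Set Fˣ)
    (hS : ∀ n k : ℕ, 1 ≤ n → 1 ≤ k → ∀ s ∈ S n, s ^ k ∈ S (n * k))
    (hS' : ∀ n k : ℕ, 1 ≤ n → 1 ≤ k → ∀ s ∈ S' n, s ^ k ∈ S' (n * k))
    (hT : ∀ n : ℕ, 1 ≤ n → ∀ s ∈ S n, ∀ s' ∈ S' n, s * s' ∈ T n) :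
    okounkovSet ν S + okounkovSet ν S' ⊆ okounkovSet ν T := by
  have hpow : ∀ (a : Fˣ) (k : ℕ), 1 ≤ k → ∀ i, ν (a ^ k) i = k * ν a i := by
    intro a k hk i
    induction k, hk using Nat.le_induction with
    | base => simp
    | succ k hk ih =>
      rw [pow_succ, hν, Pi.add_apply, ih]
      push_cast
      ring
  rintro _ ⟨x, hx, y, hy, rfl⟩
  refine map_mem_closure₂ continuous_add hx hy ?_
  rintro _ ⟨n, hn, s, hs, rfl⟩ _ ⟨m, hm, t, ht, rfl⟩
  refine ⟨n * m, Nat.mul_pos hn hm, s ^ m * t ^ n,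
    hT _ (Nat.mul_pos hn hm) _ (hS n m hn hm s hs) _ ?_, ?_⟩
  · rw [mul_comm n m]
    exact hS' m n hm hn t ht
  · funext i
    have h1 : (n : ℝ) ≠ 0 := by positivity
    have h2 : (m : ℝ) ≠ 0 := by positivity
    rw [hν]
    simp only [Pi.add_apply, hpow s m hm i, hpow t n hn i]
    push_cast
    field_simp
end
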